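/- Let K be a number field with ring of integers 𝓞_K, K̂ = K ⊗_ℚ ℝ, and 𝔫 a nonzero ideal. Let 𝔭 and 𝔮 be nonzero fractional ideals of K and consider the standard modular point P = (𝔮·(𝔭 ⊕ 𝓞_K), 𝔮·(𝔭 ⊕ 𝔫⁻¹)) in K̂². Then for U, U' ∈ GL(2, K̂), one has P·U = P·U' (equality of both lattices: (𝔮·(𝔭 ⊕ 𝓞_K))U = (𝔮·(𝔭 ⊕ 𝓞_K))U' and (𝔮·(𝔭 ⊕ 𝔫⁻¹))U = (𝔮·(𝔭 ⊕ 𝔫⁻¹))U') if and only if U'·U⁻¹ is the image of a 2×2 matrix over K whose diagonal entries lie in 𝓞_K, whose upper-right entry lies in 𝔭⁻¹, whose lower-left entry lies in 𝔫𝔭, and whose determinant is a unit of 𝓞_K (i.e. U'U⁻¹ ∈ Γ₀^𝔭(𝔫)). Consequently, the set of admissible basis matrices of the modular point P·U is exactly the coset Γ₀^𝔭(𝔫)·U. -/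

import Mathlib

/-!
Write `W = U'U⁻¹`. The lattice equality `L·U = L·U'` says that `L` is stable under both `W` and
`W⁻¹` (`latMap_eq_iff`). A matrix stabilising `𝔞 ⊕ 𝔟` with `𝔞, 𝔟 ≠ 0` has all its entries in `K`
(`exists_map_of_latMap_le`), and for a matrix over `K` stability amounts to membership of each
entry in a colon ideal such as `(𝔟 : 𝔞) = 𝔟𝔞⁻¹` (`latMap_map_le_iff`). For the two lattices
`𝔮𝔭 ⊕ 𝔮` and `𝔮𝔭 ⊕ 𝔮𝔫⁻¹` together, these are precisely the entrywise conditions of `Γ₀^𝔭(𝔫)`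
(`stable_iff_isGammaEntries`).

The determinant condition corresponds to stability under `W⁻¹`: the entrywise conditions force an
integral determinant, so if they hold for both `W` and `W⁻¹` the determinant is a unit; conversely,
when the determinant is a unit, the adjugate formula shows that the inverse satisfies them too.
-/

open scoped TensorProduct
open NumberField

set_option synthInstance.maxHeartbeats 1000000

/-- The embedding `K → K̂ = K ⊗_ℚ ℝ`, as an `𝓞_K`-linear map. -/
noncomputable def embK (K : Type*) [Field K] [NumberField K] : K →ₗ[𝓞 K] (K ⊗[ℚ] ℝ) :=
  LinearMap.restrictScalars (𝓞 K) (Algebra.linearMap K (K ⊗[ℚ] ℝ))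

/-- The `𝓞_K`-submodule `𝔞 ⊕ 𝔟` of `K̂²` (row vectors), for fractional ideals `𝔞, 𝔟`:
the image of `{(x, y) : x ∈ 𝔞, y ∈ 𝔟}`. -/
noncomputable def fracPair (K : Type*) [Field K] [NumberField K]
    (a b : FractionalIdeal (nonZeroDivisors (𝓞 K)) K) :
    Submodule (𝓞 K) (Fin 2 → K ⊗[ℚ] ℝ) :=
  Submodule.pi Set.univ
    ![Submodule.map (embK K) (a : Submodule (𝓞 K) K),
      Submodule.map (embK K) (b : Submodule (𝓞 K) K)]

/-- The image `L·U` of an `𝓞_K`-submodule `L` of `K̂²` under right multiplication by a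
2×2 matrix `U` over `K̂` (acting on row vectors). -/
noncomputable def latMap (K : Type*) [Field K] [NumberField K]
    (U : Matrix (Fin 2) (Fin 2) (K ⊗[ℚ] ℝ))
    (L : Submodule (𝓞 K) (Fin 2 → K ⊗[ℚ] ℝ)) : Submodule (𝓞 K) (Fin 2 → K ⊗[ℚ] ℝ) :=
  Submodule.map (LinearMap.restrictScalars (𝓞 K) (Matrix.vecMulLinear U)) L

section Helpers

variable {K : Type*} [Field K] [NumberField K]

/-- For `J ≠ 0`, the colon ideal `(I : J)` equals `I * J⁻¹`. -/
lemma mem_mul_inv_iff {I J : FractionalIdeal (nonZeroDivisors (𝓞 K)) K} (hJ : J ≠ 0) (x : K) :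
    x ∈ I * J⁻¹ ↔ ∀ y ∈ J, x * y ∈ I := by
  rw [← div_eq_mul_inv, FractionalIdeal.mem_div_iff_of_ne_zero hJ]

lemma mem_fracPair {a b : FractionalIdeal (nonZeroDivisors (𝓞 K)) K}
    {v : Fin 2 → K ⊗[ℚ] ℝ} :
    v ∈ fracPair K a b ↔
      (∃ x ∈ a, algebraMap K (K ⊗[ℚ] ℝ) x = v 0) ∧
      (∃ y ∈ b, algebraMap K (K ⊗[ℚ] ℝ) y = v 1) := by
  simp only [fracPair, Submodule.mem_pi, Set.mem_univ, true_imp_iff, Fin.forall_fin_two]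
  rfl

lemma latMap_mul (A B : Matrix (Fin 2) (Fin 2) (K ⊗[ℚ] ℝ))
    (L : Submodule (𝓞 K) (Fin 2 → K ⊗[ℚ] ℝ)) :
    latMap K (A * B) L = latMap K B (latMap K A L) := by
  ext v
  simp [latMap, Submodule.mem_map, Matrix.vecMul_vecMul]

lemma latMap_one (L : Submodule (𝓞 K) (Fin 2 → K ⊗[ℚ] ℝ)) : latMap K 1 L = L := by
  ext v
  simp [latMap, Submodule.mem_map]

lemma latMap_mono (A : Matrix (Fin 2) (Fin 2) (K ⊗[ℚ] ℝ))
    {L M : Submodule (𝓞 K) (Fin 2 → K ⊗[ℚ] ℝ)} (h : L ≤ M) : latMap K A L ≤ latMap K A M :=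
  Submodule.map_mono h

/-- Two translates of `L` agree exactly when `L` is stable under both the quotient `U'U⁻¹` and
its inverse. -/
lemma latMap_eq_iff (U U' : GL (Fin 2) (K ⊗[ℚ] ℝ))
    (L : Submodule (𝓞 K) (Fin 2 → K ⊗[ℚ] ℝ)) :
    latMap K (U : Matrix (Fin 2) (Fin 2) (K ⊗[ℚ] ℝ)) L
        = latMap K (U' : Matrix (Fin 2) (Fin 2) (K ⊗[ℚ] ℝ)) L ↔
      latMap K ((U' * U⁻¹ : GL (Fin 2) (K ⊗[ℚ] ℝ)) : Matrix (Fin 2) (Fin 2) (K ⊗[ℚ] ℝ)) L ≤ L ∧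
      latMap K (((U' * U⁻¹)⁻¹ : GL (Fin 2) (K ⊗[ℚ] ℝ)) :
        Matrix (Fin 2) (Fin 2) (K ⊗[ℚ] ℝ)) L ≤ L := by
  have cancel (A : GL (Fin 2) (K ⊗[ℚ] ℝ)) (M : Submodule (𝓞 K) (Fin 2 → K ⊗[ℚ] ℝ)) :
      latMap K (A⁻¹ : GL (Fin 2) (K ⊗[ℚ] ℝ)).val (latMap K A.val M) = M := by
    rw [← latMap_mul, ← Units.val_mul, mul_inv_cancel, Units.val_one, latMap_one]
  have cancel' (A : GL (Fin 2) (K ⊗[ℚ] ℝ)) (M : Submodule (𝓞 K) (Fin 2 → K ⊗[ℚ] ℝ)) :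
      latMap K A.val (latMap K (A⁻¹ : GL (Fin 2) (K ⊗[ℚ] ℝ)).val M) = M := by
    rw [← latMap_mul, ← Units.val_mul, inv_mul_cancel, Units.val_one, latMap_one]
  rw [mul_inv_rev, inv_inv, Units.val_mul, Units.val_mul, latMap_mul, latMap_mul]
  constructor
  · intro h
    rw [← h, cancel, h, cancel]
    exact ⟨le_rfl, le_rfl⟩
  · rintro ⟨h1, h2⟩
    apply le_antisymm
    · simpa only [cancel'] using latMap_mono U'.val h2
    · simpa only [cancel'] using latMap_mono U.val h1

/-- Stability of `𝔞 ⊕ 𝔟` under a matrix over `K` is an entrywise condition. -/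
lemma latMap_map_le_iff {a b : FractionalIdeal (nonZeroDivisors (𝓞 K)) K}
    (ha : a ≠ 0) (hb : b ≠ 0) (u : Matrix (Fin 2) (Fin 2) K) :
    latMap K (u.map (algebraMap K (K ⊗[ℚ] ℝ))) (fracPair K a b) ≤ fracPair K a b ↔
      (u 0 0 ∈ (1 : FractionalIdeal (nonZeroDivisors (𝓞 K)) K) ∧ u 0 1 ∈ b * a⁻¹) ∧
      (u 1 0 ∈ a * b⁻¹ ∧ u 1 1 ∈ (1 : FractionalIdeal (nonZeroDivisors (𝓞 K)) K)) := by
  have inj : Function.Injective (algebraMap K (K ⊗[ℚ] ℝ)) := (algebraMap K (K ⊗[ℚ] ℝ)).injective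
  have h1 : (1 : FractionalIdeal (nonZeroDivisors (𝓞 K)) K) = a * a⁻¹ :=
    (mul_inv_cancel₀ ha).symm
  have h2 : (1 : FractionalIdeal (nonZeroDivisors (𝓞 K)) K) = b * b⁻¹ :=
    (mul_inv_cancel₀ hb).symm
  have key : latMap K (u.map (algebraMap K (K ⊗[ℚ] ℝ))) (fracPair K a b) ≤ fracPair K a b ↔
      ∀ x ∈ a, ∀ y ∈ b, u 0 0 * x + u 1 0 * y ∈ a ∧ u 0 1 * x + u 1 1 * y ∈ b := by
    rw [latMap, Submodule.map_le_iff_le_comap]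
    constructor
    · intro h x hx y hy
      have := h (mem_fracPair (v := ![algebraMap K _ x, algebraMap K _ y]).2
        ⟨⟨x, hx, rfl⟩, ⟨y, hy, rfl⟩⟩)
      obtain ⟨⟨z, hz, hz'⟩, ⟨w, hw, hw'⟩⟩ := mem_fracPair.1 (Submodule.mem_comap.1 this)
      simp only [LinearMap.coe_restrictScalars, Matrix.vecMulLinear_apply, Matrix.vecMul,
        dotProduct, Fin.sum_univ_two, Matrix.cons_val_zero, Matrix.cons_val_one,
        Matrix.map_apply, ← map_mul, ← map_add] at hz' hw'
      have e1 := inj hz'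
      have e2 := inj hw'
      rw [mul_comm (u 0 0), mul_comm (u 1 0), mul_comm (u 0 1), mul_comm (u 1 1), ← e1, ← e2]
      exact ⟨hz, hw⟩
    · intro h v hv
      obtain ⟨⟨x, hx, hx'⟩, ⟨y, hy, hy'⟩⟩ := mem_fracPair.1 hv
      obtain ⟨hz, hw⟩ := h x hx y hy
      refine Submodule.mem_comap.2 (mem_fracPair.2 ⟨⟨_, hz, ?_⟩, ⟨_, hw, ?_⟩⟩) <;>
      simp only [LinearMap.coe_restrictScalars, Matrix.vecMulLinear_apply, Matrix.vecMul,
        dotProduct, Fin.sum_univ_two, Matrix.map_apply, ← hx', ← hy', map_mul, map_add] <;>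
      ring
  rw [key]
  constructor
  · intro h
    refine ⟨⟨?_, ?_⟩, ?_, ?_⟩
    · rw [h1, mem_mul_inv_iff ha]
      intro x hx
      simpa using (h x hx 0 b.1.zero_mem).1
    · rw [mem_mul_inv_iff ha]
      intro x hx
      simpa using (h x hx 0 b.1.zero_mem).2
    · rw [mem_mul_inv_iff hb]
      intro y hy
      simpa using (h 0 a.1.zero_mem y hy).1
    · rw [h2, mem_mul_inv_iff hb]
      intro y hy
      simpa using (h 0 a.1.zero_mem y hy).2
  · rintro ⟨⟨h00, h01⟩, h10, h11⟩ x hx y hy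
    rw [h1, mem_mul_inv_iff ha] at h00
    rw [h2, mem_mul_inv_iff hb] at h11
    rw [mem_mul_inv_iff ha] at h01
    rw [mem_mul_inv_iff hb] at h10
    exact ⟨a.1.add_mem (h00 x hx) (h10 y hy), b.1.add_mem (h01 x hx) (h11 y hy)⟩

/-- A matrix over `K̂` stabilising `𝔞 ⊕ 𝔟` is defined over `K`: its rows are `K`-multiples of the
images of `(x, 0)` and `(0, y)`, for nonzero `x ∈ 𝔞` and `y ∈ 𝔟`. -/
lemma exists_map_of_latMap_le {a b : FractionalIdeal (nonZeroDivisors (𝓞 K)) K}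
    (ha : a ≠ 0) (hb : b ≠ 0) {W : Matrix (Fin 2) (Fin 2) (K ⊗[ℚ] ℝ)}
    (h : latMap K W (fracPair K a b) ≤ fracPair K a b) :
    ∃ u : Matrix (Fin 2) (Fin 2) K, W = u.map (algebraMap K (K ⊗[ℚ] ℝ)) := by
  have exNe {c : FractionalIdeal (nonZeroDivisors (𝓞 K)) K} (hc : c ≠ 0) : ∃ x ∈ c, x ≠ 0 := by
    by_contra! hcon
    exact hc (FractionalIdeal.eq_zero_iff.2 hcon)
  have divide {x z : K} {w : K ⊗[ℚ] ℝ} (hx : x ≠ 0)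
      (e : algebraMap K (K ⊗[ℚ] ℝ) z = algebraMap K _ x * w) :
      w = algebraMap K (K ⊗[ℚ] ℝ) (x⁻¹ * z) := by
    rw [map_mul, e, ← mul_assoc, ← map_mul, inv_mul_cancel₀ hx, map_one, one_mul]
  rw [latMap, Submodule.map_le_iff_le_comap] at h
  obtain ⟨x, hx, hx0⟩ := exNe ha
  obtain ⟨y, hy, hy0⟩ := exNe hb
  have hr0 := h (mem_fracPair (v := ![algebraMap K _ x, 0]).2
    ⟨⟨x, hx, rfl⟩, ⟨0, b.1.zero_mem, map_zero _⟩⟩)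
  have hr1 := h (mem_fracPair (v := ![0, algebraMap K _ y]).2
    ⟨⟨0, a.1.zero_mem, map_zero _⟩, ⟨y, hy, rfl⟩⟩)
  obtain ⟨⟨z00, -, e00⟩, ⟨z01, -, e01⟩⟩ := mem_fracPair.1 (Submodule.mem_comap.1 hr0)
  obtain ⟨⟨z10, -, e10⟩, ⟨z11, -, e11⟩⟩ := mem_fracPair.1 (Submodule.mem_comap.1 hr1)
  simp only [LinearMap.coe_restrictScalars, Matrix.vecMulLinear_apply, Matrix.vecMul,
    dotProduct, Fin.sum_univ_two, Matrix.cons_val_zero, Matrix.cons_val_one,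
    zero_mul, add_zero, zero_add] at e00 e01 e10 e11
  refine ⟨!![x⁻¹ * z00, x⁻¹ * z01; y⁻¹ * z10, y⁻¹ * z11], ?_⟩
  ext i j
  fin_cases i <;> fin_cases j
  · exact divide hx0 e00
  · exact divide hx0 e01
  · exact divide hy0 e10
  · exact divide hy0 e11

/-- The entrywise conditions defining `Γ₀^𝔭(𝔫)`, without the determinant condition. -/
def IsGammaEntries (n p : FractionalIdeal (nonZeroDivisors (𝓞 K)) K)
    (u : Matrix (Fin 2) (Fin 2) K) : Prop :=
  u 0 0 ∈ (1 : FractionalIdeal (nonZeroDivisors (𝓞 K)) K) ∧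
  u 1 1 ∈ (1 : FractionalIdeal (nonZeroDivisors (𝓞 K)) K) ∧
  u 0 1 ∈ p⁻¹ ∧ u 1 0 ∈ n * p

/-- A matrix over `K` stabilises both lattices of the standard modular point exactly when it
satisfies the entrywise conditions of `Γ₀^𝔭(𝔫)`. The first lattice gives the condition on the
upper-right entry and the second the stronger condition on the lower-left one; integrality of `𝔫`
makes the two remaining conditions redundant. -/
lemma stable_iff_isGammaEntries {n p q : FractionalIdeal (nonZeroDivisors (𝓞 K)) K}
    (hn : n ≠ 0) (hn1 : n ≤ 1) (hp : p ≠ 0) (hq : q ≠ 0) (u : Matrix (Fin 2) (Fin 2) K) :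
    (latMap K (u.map (algebraMap K (K ⊗[ℚ] ℝ))) (fracPair K (q * p) q) ≤ fracPair K (q * p) q ∧
      latMap K (u.map (algebraMap K (K ⊗[ℚ] ℝ))) (fracPair K (q * p) (q * n⁻¹))
        ≤ fracPair K (q * p) (q * n⁻¹)) ↔ IsGammaEntries n p u := by
  rw [latMap_map_le_iff (mul_ne_zero hq hp) hq,
    latMap_map_le_iff (mul_ne_zero hq hp) (mul_ne_zero hq (inv_ne_zero hn))]
  have e1 : q * (q * p)⁻¹ = p⁻¹ := by field_simp
  have e2 : q * p * q⁻¹ = p := by field_simp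
  have e3 : q * n⁻¹ * (q * p)⁻¹ = n⁻¹ * p⁻¹ := by field_simp
  have e4 : q * p * (q * n⁻¹)⁻¹ = n * p := by field_simp
  rw [e1, e2, e3, e4]
  have hnp : n * p ≤ p := by simpa using mul_le_mul_left hn1 p
  have hpn : p⁻¹ ≤ n⁻¹ * p⁻¹ := by
    have : n * (n⁻¹ * p⁻¹) ≤ 1 * (n⁻¹ * p⁻¹) := mul_le_mul_left hn1 _
    rwa [mul_inv_cancel_left₀ hn, one_mul] at this
  constructor
  · rintro ⟨⟨⟨h00, h01⟩, h10, h11⟩, ⟨-, -⟩, h10', -⟩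
    exact ⟨h00, h11, h01, h10'⟩
  · rintro ⟨h00, h11, h01, h10⟩
    exact ⟨⟨⟨h00, h01⟩, hnp h10, h11⟩, ⟨h00, hpn h01⟩, h10, h11⟩

lemma IsGammaEntries.det_mem {n p : FractionalIdeal (nonZeroDivisors (𝓞 K)) K}
    (hn1 : n ≤ 1) (hp : p ≠ 0) {u : Matrix (Fin 2) (Fin 2) K} (h : IsGammaEntries n p u) :
    u.det ∈ (1 : FractionalIdeal (nonZeroDivisors (𝓞 K)) K) := by
  obtain ⟨h00, h11, h01, h10⟩ := h
  rw [Matrix.det_fin_two]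
  refine Submodule.sub_mem _ ?_ ?_
  · simpa using FractionalIdeal.mul_mem_mul h00 h11
  · have := FractionalIdeal.mul_mem_mul h01 h10
    rw [mul_comm n p, inv_mul_cancel_left₀ hp] at this
    exact hn1 this

/-- If the determinant of `u` is a unit, the entrywise conditions of `Γ₀^𝔭(𝔫)` pass to `u⁻¹`,
which is the adjugate of `u` scaled by that unit's inverse. -/
lemma IsGammaEntries.inv {n p : FractionalIdeal (nonZeroDivisors (𝓞 K)) K}
    {u : Matrix (Fin 2) (Fin 2) K} (h : IsGammaEntries n p u) (e : (𝓞 K)ˣ)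
    (he : algebraMap (𝓞 K) K e = u.det) : IsGammaEntries n p u⁻¹ := by
  obtain ⟨h00, h11, h01, h10⟩ := h
  have hdet : Ring.inverse u.det = algebraMap (𝓞 K) K (e⁻¹ : (𝓞 K)ˣ) := by
    rw [← he, Ring.inverse_eq_inv']
    refine inv_eq_of_mul_eq_one_right ?_
    rw [← map_mul, Units.mul_inv, map_one]
  have smul_mem' {I : FractionalIdeal (nonZeroDivisors (𝓞 K)) K} {x : K} (hx : x ∈ I) :
      algebraMap (𝓞 K) K (e⁻¹ : (𝓞 K)ˣ) * x ∈ I := by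
    rw [← Algebra.smul_def]
    exact Submodule.smul_mem (I : Submodule (𝓞 K) K) _ hx
  rw [Matrix.inv_def, hdet, Matrix.adjugate_fin_two]
  exact ⟨smul_mem' h11, smul_mem' h00, smul_mem' (Submodule.neg_mem _ h01), smul_mem' (Submodule.neg_mem _ h10)⟩

end Helpers

/-- For the standard modular point `P = (𝔮(𝔭 ⊕ 𝓞_K), 𝔮(𝔭 ⊕ 𝔫⁻¹))` and `U, U' ∈ GL(2, K̂)`,
one has `P·U = P·U'` if and only if `U'U⁻¹` is the image of a matrix over `K` with diagonal
entries in `𝓞_K`, upper-right entry in `𝔭⁻¹`, lower-left entry in `𝔫𝔭`, and unit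
determinant, i.e. `U'U⁻¹ ∈ Γ₀^𝔭(𝔫)`.  Consequently the set of admissible basis matrices of
`P·U` is exactly the coset `Γ₀^𝔭(𝔫)·U`. -/
theorem standard_modular_point_translates_eq_iff
    {K : Type*} [Field K] [NumberField K] (n : Ideal (𝓞 K)) (hn : n ≠ 0)
    (p q : FractionalIdeal (nonZeroDivisors (𝓞 K)) K) (hp : p ≠ 0) (hq : q ≠ 0)
    (U U' : GL (Fin 2) (K ⊗[ℚ] ℝ)) :
    (latMap K (U : Matrix (Fin 2) (Fin 2) (K ⊗[ℚ] ℝ)) (fracPair K (q * p) q)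
        = latMap K (U' : Matrix (Fin 2) (Fin 2) (K ⊗[ℚ] ℝ)) (fracPair K (q * p) q) ∧
     latMap K (U : Matrix (Fin 2) (Fin 2) (K ⊗[ℚ] ℝ))
         (fracPair K (q * p) (q * (n : FractionalIdeal (nonZeroDivisors (𝓞 K)) K)⁻¹))
        = latMap K (U' : Matrix (Fin 2) (Fin 2) (K ⊗[ℚ] ℝ))
         (fracPair K (q * p) (q * (n : FractionalIdeal (nonZeroDivisors (𝓞 K)) K)⁻¹)))
    ↔ ∃ u : Matrix (Fin 2) (Fin 2) K,
        u 0 0 ∈ (1 : FractionalIdeal (nonZeroDivisors (𝓞 K)) K) ∧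
        u 1 1 ∈ (1 : FractionalIdeal (nonZeroDivisors (𝓞 K)) K) ∧
        u 0 1 ∈ p⁻¹ ∧
        u 1 0 ∈ (n : FractionalIdeal (nonZeroDivisors (𝓞 K)) K) * p ∧
        (∃ e : (𝓞 K)ˣ, algebraMap (𝓞 K) K e = u.det) ∧
        ((U' * U⁻¹ : GL (Fin 2) (K ⊗[ℚ] ℝ)) : Matrix (Fin 2) (Fin 2) (K ⊗[ℚ] ℝ))
          = u.map (algebraMap K (K ⊗[ℚ] ℝ)) := by
  have hn0 : (n : FractionalIdeal (nonZeroDivisors (𝓞 K)) K) ≠ 0 :=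
    FractionalIdeal.coeIdeal_ne_zero.2 hn
  have hn1 : (n : FractionalIdeal (nonZeroDivisors (𝓞 K)) K) ≤ 1 :=
    FractionalIdeal.coeIdeal_le_one
  have hqp := mul_ne_zero hq hp
  have inj : Function.Injective (algebraMap K (K ⊗[ℚ] ℝ)) := (algebraMap K (K ⊗[ℚ] ℝ)).injective
  rw [latMap_eq_iff, latMap_eq_iff]
  generalize U' * U⁻¹ = W
  constructor
  · rintro ⟨⟨h1, h1'⟩, h2, h2'⟩
    obtain ⟨u, hu⟩ := exists_map_of_latMap_le hqp hq h1
    obtain ⟨v, hv⟩ := exists_map_of_latMap_le hqp hq h1'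
    rw [hu] at h1 h2
    rw [hv] at h1' h2'
    have gu := (stable_iff_isGammaEntries hn0 hn1 hp hq u).1 ⟨h1, h2⟩
    have gv := (stable_iff_isGammaEntries hn0 hn1 hp hq v).1 ⟨h1', h2'⟩
    have huv : u * v = 1 := by
      apply Matrix.map_injective inj
      change (u * v).map _ = (1 : Matrix (Fin 2) (Fin 2) K).map _
      rw [Matrix.map_mul, ← hu, ← hv, ← Units.val_mul, mul_inv_cancel, Units.val_one,
        Matrix.map_one _ (map_zero _) (map_one _)]
    obtain ⟨d, hd⟩ := (FractionalIdeal.mem_one_iff _).1 (gu.det_mem hn1 hp)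
    obtain ⟨d', hd'⟩ := (FractionalIdeal.mem_one_iff _).1 (gv.det_mem hn1 hp)
    have hdd : d * d' = 1 := by
      apply FaithfulSMul.algebraMap_injective (𝓞 K) K
      rw [map_mul, hd, hd', ← Matrix.det_mul, huv, Matrix.det_one, map_one]
    exact ⟨u, gu.1, gu.2.1, gu.2.2.1, gu.2.2.2,
      ⟨Units.mkOfMulEqOne d d' hdd, hd⟩, hu⟩
  · rintro ⟨u, h00, h11, h01, h10, ⟨e, he⟩, hu⟩
    have gu : IsGammaEntries (n : FractionalIdeal (nonZeroDivisors (𝓞 K)) K) p u :=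
      ⟨h00, h11, h01, h10⟩
    have hdet : IsUnit u.det := he ▸ (e.isUnit.map (algebraMap (𝓞 K) K))
    have hv : (W⁻¹ : GL (Fin 2) (K ⊗[ℚ] ℝ)).val = u⁻¹.map (algebraMap K (K ⊗[ℚ] ℝ)) := by
      refine Units.inv_eq_of_mul_eq_one_right ?_
      rw [hu, ← Matrix.map_mul, Matrix.mul_nonsing_inv _ hdet,
        Matrix.map_one _ (map_zero _) (map_one _)]
    obtain ⟨h1, h2⟩ := (stable_iff_isGammaEntries hn0 hn1 hp hq u).2 gu
    obtain ⟨h1', h2'⟩ := (stable_iff_isGammaEntries hn0 hn1 hp hq u⁻¹).2 (gu.inv e he)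
    rw [hu, hv]
    exact ⟨⟨h1, h1'⟩, h2, h2'⟩
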